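/- Assume m13 + m33 + 1 = 0 (the class 1 nontypicality condition; note m23 + m33 ≠ 0 then follows from m13 ≥ m23). Then I_1 := V_2 ⊕ V_3 is a proper invariant subspace of W, every proper invariant subspace of W is contained in I_1, and the operators induced by E11, E22, E33, E12, E21, E23, E32 on the quotient space W/I_1 leave no subspace invariant except {0} and W/I_1; i.e. W/I_1 carries the class 1 nontypical irreducible representation of U_q[gl(2/1)]. -/

import Mathlib

/-!
Write `I₁ = V₂ ⊔ V₃`. The condition `m13 + m33 + 1 = 0` kills exactly the coefficients of `E23`
that lead from `V₂` to `V₀` and from `V₃` to `V₁`, so `I₁` is invariant; it is proper because the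
coordinate along `v(0, m13)` vanishes on it.

Everything else follows from one fact (`eq_top_of_not_le`): an invariant `U` not contained in `I₁`
is all of `W`. Take `u ∈ U` with a nonzero coordinate at some `v(k, x)`, `k ∈ {0, 1}`. As `E11` and
`E33` are diagonal, `U` contains their simultaneous eigencomponents of `u` (`filter_mem`): this is
a multiple of `v(0, x)`, or a combination `a v(1, x) + b v(2, x)` with `a ≠ 0`, since `V₁` and `V₂`
share their weights. In the latter case `E23` sends it to a nonzero multiple of `v(0, x)`, because
`[m13 + m33 + 1] = 0` and `[m23 + m33] ≠ 0`; for `x = m23 - 1`, where `v(0, x)` does not exist,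
`v(2, x)` does not exist either, so `v(1, x) ∈ U` and `E12` raises it to `v(1, m23)` first. From one
vector of `V₀` the operators `E12`, `E21` produce all of `V₀` (`sector_mem`). Then `E32 v(0, m13)`
is a multiple of `v(1, m13)`, which gives `V₁`; subtracting, `E32 V₀` gives `V₂`, and `E32 V₁`
gives `V₃`.

An invariant subspace of `W ⧸ I₁` pulls back to an invariant subspace of `W` containing `I₁`, which
is therefore `I₁` or `W`.
-/

noncomputable section

/-- The `q`-number `[x] = (q^x - q^(-x))/(q - q⁻¹)`. -/
def qn (q : ℝ) (x : ℤ) : ℝ := (q ^ x - q ^ (-x)) / (q - q⁻¹)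

/-- The triple `(m12, m22, m32)` attached to the sector `k ∈ {0,1,2,3}`. -/
def trip (m13 m23 m33 : ℤ) : Fin 4 → ℤ × ℤ × ℤ
  | 0 => (m13, m23, m33)
  | 1 => (m13, m23 - 1, m33 + 1)
  | 2 => (m13 - 1, m23, m33 + 1)
  | 3 => (m13 - 1, m23 - 1, m33 + 2)

def M12 (m13 m23 m33 : ℤ) (k : Fin 4) : ℤ := (trip m13 m23 m33 k).1
def M22 (m13 m23 m33 : ℤ) (k : Fin 4) : ℤ := (trip m13 m23 m33 k).2.1
def M32 (m13 m23 m33 : ℤ) (k : Fin 4) : ℤ := (trip m13 m23 m33 k).2.2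

/-- `m11` is in the allowed range `m22 ≤ m11 ≤ m12` of the sector `k`. -/
def InR (m13 m23 m33 : ℤ) (k : Fin 4) (x : ℤ) : Prop :=
  M22 m13 m23 m33 k ≤ x ∧ x ≤ M12 m13 m23 m33 k

instance (m13 m23 m33 : ℤ) (k : Fin 4) (x : ℤ) : Decidable (InR m13 m23 m33 k x) :=
  instDecidableAnd

/-- The index set of the basis `v(k, m11)` of `W`. -/
abbrev Idx (m13 m23 m33 : ℤ) : Type :=
  {p : Fin 4 × ℤ // InR m13 m23 m33 p.1 p.2}

/-- The module `W = W^q([m13,m23,m33])`, realized as the free complex vector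
space on the basis `v(k, m11)`, `k ∈ {0,1,2,3}`, `m22 ≤ m11 ≤ m12`. -/
abbrev Wsp (m13 m23 m33 : ℤ) : Type := Idx m13 m23 m33 →₀ ℂ

/-- The basis vector `v(k, m11)` (zero if `m11` is out of range). -/
def bv (m13 m23 m33 : ℤ) (k : Fin 4) (x : ℤ) : Wsp m13 m23 m33 :=
  if h : InR m13 m23 m33 k x then Finsupp.single ⟨(k, x), h⟩ 1 else 0

/-- The sector `V_k`, the span of the `v(k, ·)`. -/
def Vk (m13 m23 m33 : ℤ) (k : Fin 4) : Submodule ℂ (Wsp m13 m23 m33) :=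
  Submodule.span ℂ (Set.range (bv m13 m23 m33 k))

/-- The Gel'fand--Zetlin realization of the induced `U_q[gl(2/1)]`-module
`W^q([m13,m23,m33])`: seven linear operators acting on the basis `v(k, m11)`
by the stated formulas (terms with `m11` out of range being `0`). -/
structure GZ (q : ℝ) (m13 m23 m33 : ℤ) where
  E11 : Wsp m13 m23 m33 →ₗ[ℂ] Wsp m13 m23 m33
  E22 : Wsp m13 m23 m33 →ₗ[ℂ] Wsp m13 m23 m33
  E33 : Wsp m13 m23 m33 →ₗ[ℂ] Wsp m13 m23 m33
  E12 : Wsp m13 m23 m33 →ₗ[ℂ] Wsp m13 m23 m33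
  E21 : Wsp m13 m23 m33 →ₗ[ℂ] Wsp m13 m23 m33
  E23 : Wsp m13 m23 m33 →ₗ[ℂ] Wsp m13 m23 m33
  E32 : Wsp m13 m23 m33 →ₗ[ℂ] Wsp m13 m23 m33
  hE11 : ∀ (k : Fin 4) (x : ℤ), InR m13 m23 m33 k x →
    E11 (bv m13 m23 m33 k x) = (x : ℂ) • bv m13 m23 m33 k x
  hE22 : ∀ (k : Fin 4) (x : ℤ), InR m13 m23 m33 k x →
    E22 (bv m13 m23 m33 k x) =
      ((M12 m13 m23 m33 k + M22 m13 m23 m33 k - x : ℤ) : ℂ) • bv m13 m23 m33 k x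
  hE33 : ∀ (k : Fin 4) (x : ℤ), InR m13 m23 m33 k x →
    E33 (bv m13 m23 m33 k x) = ((M32 m13 m23 m33 k : ℤ) : ℂ) • bv m13 m23 m33 k x
  hE12 : ∀ (k : Fin 4) (x : ℤ), InR m13 m23 m33 k x →
    E12 (bv m13 m23 m33 k x) =
      ((Real.sqrt (qn q (M12 m13 m23 m33 k - x) * qn q (x - M22 m13 m23 m33 k + 1)) : ℝ) : ℂ) •
        bv m13 m23 m33 k (x + 1)
  hE21 : ∀ (k : Fin 4) (x : ℤ), InR m13 m23 m33 k x →
    E21 (bv m13 m23 m33 k x) =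
      ((Real.sqrt (qn q (M12 m13 m23 m33 k - x + 1) * qn q (x - M22 m13 m23 m33 k)) : ℝ) : ℂ) •
        bv m13 m23 m33 k (x - 1)
  hE23₀ : ∀ x : ℤ, InR m13 m23 m33 0 x → E23 (bv m13 m23 m33 0 x) = 0
  hE23₁ : ∀ x : ℤ, InR m13 m23 m33 1 x →
    E23 (bv m13 m23 m33 1 x) =
      ((Real.sqrt (qn q (x - m23 + 1) / qn q (m13 - m23 + 1)) * qn q (m23 + m33) : ℝ) : ℂ) •
        bv m13 m23 m33 0 x
  hE23₂ : ∀ x : ℤ, InR m13 m23 m33 2 x →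
    E23 (bv m13 m23 m33 2 x) =
      ((Real.sqrt (qn q (m13 - x) / qn q (m13 - m23)) * qn q (m13 + m33 + 1) : ℝ) : ℂ) •
        bv m13 m23 m33 0 x
  hE23₃ : ∀ x : ℤ, InR m13 m23 m33 3 x →
    E23 (bv m13 m23 m33 3 x) =
      ((q⁻¹ * Real.sqrt (qn q (m13 - x) / qn q (m13 - m23 + 1)) * qn q (m13 + m33 + 1) : ℝ) : ℂ) •
          bv m13 m23 m33 1 x
        - ((q⁻¹ * Real.sqrt (qn q (x - m23 + 1) * qn q (m13 - m23)) *
            (qn q (m23 + m33) / qn q (m13 - m23 + 1)) : ℝ) : ℂ) • bv m13 m23 m33 2 x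
  hE32₀ : ∀ x : ℤ, InR m13 m23 m33 0 x →
    E32 (bv m13 m23 m33 0 x) =
      ((Real.sqrt (qn q (x - m23 + 1) / qn q (m13 - m23 + 1)) : ℝ) : ℂ) • bv m13 m23 m33 1 x
        + ((Real.sqrt (qn q (m13 - x) * qn q (m13 - m23)) / qn q (m13 - m23 + 1) : ℝ) : ℂ) •
            bv m13 m23 m33 2 x
  hE32₁ : ∀ x : ℤ, InR m13 m23 m33 1 x →
    E32 (bv m13 m23 m33 1 x) =
      ((q * Real.sqrt (qn q (m13 - x) / qn q (m13 - m23 + 1)) : ℝ) : ℂ) • bv m13 m23 m33 3 x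
  hE32₂ : ∀ x : ℤ, InR m13 m23 m33 2 x →
    E32 (bv m13 m23 m33 2 x) =
      -(((q * Real.sqrt (qn q (x - m23 + 1) / qn q (m13 - m23)) : ℝ) : ℂ) • bv m13 m23 m33 3 x)
  hE32₃ : ∀ x : ℤ, InR m13 m23 m33 3 x → E32 (bv m13 m23 m33 3 x) = 0

/-- A subspace `U` of `W` is invariant if it is stable under all seven
operators `E11, E22, E33, E12, E21, E23, E32`. -/
def Invariant (q : ℝ) (m13 m23 m33 : ℤ) (R : GZ q m13 m23 m33)
    (U : Submodule ℂ (Wsp m13 m23 m33)) : Prop :=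
  ∀ E ∈ ({R.E11, R.E22, R.E33, R.E12, R.E21, R.E23, R.E32} :
      Set (Wsp m13 m23 m33 →ₗ[ℂ] Wsp m13 m23 m33)),
    ∀ x ∈ U, E x ∈ U

lemma qn_zero (q : ℝ) : qn q 0 = 0 := by simp [qn]

lemma qn_pos {q : ℝ} (hq : 0 < q) (hq1 : q ≠ 1) {x : ℤ} (hx : 0 < x) : 0 < qn q x := by
  unfold qn
  rcases lt_or_gt_of_ne hq1 with h | h
  · apply div_pos_of_neg_of_neg
    · have := zpow_lt_zpow_right_of_lt_one₀ hq h (show -x < x by omega)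
      linarith
    · have := (one_lt_inv₀ hq).2 h
      linarith
  · apply div_pos
    · have := zpow_lt_zpow_right₀ h (show -x < x by omega)
      linarith
    · have := inv_lt_one_of_one_lt₀ h
      linarith

lemma qn_neg (q : ℝ) (x : ℤ) : qn q (-x) = -qn q x := by
  unfold qn
  rw [neg_neg, ← neg_div, neg_sub]

lemma qn_ne_zero {q : ℝ} (hq : 0 < q) (hq1 : q ≠ 1) {x : ℤ} (hx : x < 0) : qn q x ≠ 0 := by
  have := qn_pos hq hq1 (show 0 < -x by omega)
  rw [qn_neg] at this
  linarith

/-- A subspace stable under an operator that is diagonal in the standard basis contains the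
eigencomponents of each of its vectors: a polynomial in the operator that vanishes at the other
eigenvalues met by the vector projects onto the component. -/
lemma filter_mem {ι : Type*} (T : (ι →₀ ℂ) →ₗ[ℂ] (ι →₀ ℂ)) (ev : ι → ℂ)
    (hT : ∀ i, T (Finsupp.single i 1) = ev i • Finsupp.single i 1)
    (U : Submodule ℂ (ι →₀ ℂ)) (hU : ∀ x ∈ U, T x ∈ U) (u : ι →₀ ℂ) (hu : u ∈ U) (μ : ℂ)
    [DecidablePred fun i => ev i = μ] :
    u.filter (fun i => ev i = μ) ∈ U := by
  classical
  have hcoord : ∀ w i, T w i = ev i * w i := by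
    intro w i
    induction w using Finsupp.induction_linear with
    | zero => simp
    | add f g hf hg => simp [hf, hg, mul_add]
    | single j a =>
      have : Finsupp.single j a = a • Finsupp.single j (1 : ℂ) := by simp
      rw [this, map_smul, hT]
      by_cases hij : j = i
      · subst hij; simp [mul_comm]
      · simp [hij]
  have hprod : ∀ s : Finset ℂ, ∃ w ∈ U, ∀ i, w i = (∏ ν ∈ s, (ev i - ν)) * u i := by
    intro s
    induction s using Finset.induction_on with
    | empty => exact ⟨u, hu, by simp⟩
    | insert ν s hν ih =>
      obtain ⟨w, hw, hwi⟩ := ih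
      refine ⟨T w - ν • w, U.sub_mem (hU _ hw) (U.smul_mem _ hw), fun i => ?_⟩
      rw [Finset.prod_insert hν]
      simp only [Finsupp.sub_apply, Finsupp.smul_apply, smul_eq_mul, hcoord, hwi]
      ring
  obtain ⟨w, hw, hwi⟩ := hprod ((u.support.image ev).erase μ)
  have hc : ∏ ν ∈ (u.support.image ev).erase μ, (μ - ν) ≠ 0 := by
    rw [Finset.prod_ne_zero_iff]
    intro ν hν
    exact sub_ne_zero.2 (Finset.ne_of_mem_erase hν).symm
  have : u.filter (fun i => ev i = μ) =
      (∏ ν ∈ (u.support.image ev).erase μ, (μ - ν))⁻¹ • w := by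
    ext i
    rw [Finsupp.smul_apply, smul_eq_mul, hwi, Finsupp.filter_apply]
    split_ifs with h
    · rw [h, inv_mul_cancel_left₀ hc]
    · by_cases hi : u i = 0
      · simp [hi]
      · have : ∏ ν ∈ (u.support.image ev).erase μ, (ev i - ν) = 0 := by
          refine Finset.prod_eq_zero (i := ev i) ?_ (sub_self _)
          exact Finset.mem_erase.2 ⟨h, Finset.mem_image_of_mem _ (by simpa using hi)⟩
        simp [this]
  rw [this]
  exact U.smul_mem _ hw

section Ranges

variable {m13 m23 m33 : ℤ} {x : ℤ}

lemma inR_zero : InR m13 m23 m33 0 x ↔ m23 ≤ x ∧ x ≤ m13 := Iff.rfl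

lemma inR_one : InR m13 m23 m33 1 x ↔ m23 - 1 ≤ x ∧ x ≤ m13 := Iff.rfl

lemma inR_two : InR m13 m23 m33 2 x ↔ m23 ≤ x ∧ x ≤ m13 - 1 := Iff.rfl

lemma inR_three : InR m13 m23 m33 3 x ↔ m23 - 1 ≤ x ∧ x ≤ m13 - 1 := Iff.rfl

lemma bv_of_inR {k : Fin 4} (h : InR m13 m23 m33 k x) :
    bv m13 m23 m33 k x = Finsupp.single ⟨(k, x), h⟩ 1 := dif_pos h

lemma bv_of_not_inR {k : Fin 4} (h : ¬ InR m13 m23 m33 k x) :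
    bv m13 m23 m33 k x = 0 := dif_neg h

end Ranges

lemma bv_mem_Vk (m13 m23 m33 : ℤ) (k : Fin 4) (x : ℤ) :
    bv m13 m23 m33 k x ∈ Vk m13 m23 m33 k := Submodule.subset_span ⟨x, rfl⟩

lemma Vk_le {m13 m23 m33 : ℤ} {k : Fin 4} {U : Submodule ℂ (Wsp m13 m23 m33)}
    (h : ∀ x, InR m13 m23 m33 k x → bv m13 m23 m33 k x ∈ U) : Vk m13 m23 m33 k ≤ U := by
  refine Submodule.span_le.2 ?_
  rintro _ ⟨x, rfl⟩
  by_cases hx : InR m13 m23 m33 k x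
  · exact h x hx
  · rw [bv_of_not_inR hx]
    exact U.zero_mem

lemma eq_top_of_bv_mem {m13 m23 m33 : ℤ} {U : Submodule ℂ (Wsp m13 m23 m33)}
    (h : ∀ k x, InR m13 m23 m33 k x → bv m13 m23 m33 k x ∈ U) : U = ⊤ := by
  rw [eq_top_iff]
  rintro u -
  induction u using Finsupp.induction_linear with
  | zero => exact U.zero_mem
  | add f g hf hg => exact U.add_mem hf hg
  | single i a =>
    have := U.smul_mem a (h i.1.1 i.1.2 i.2)
    rw [bv_of_inR i.2] at this
    simpa using this

/-- A vector whose coordinates in the sectors `0` and `1` vanish lies in `V₂ ⊔ V₃`. -/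
lemma mem_I1 {m13 m23 m33 : ℤ} (u : Wsp m13 m23 m33)
    (h : ∀ i : Idx m13 m23 m33, i.1.1 = 0 ∨ i.1.1 = 1 → u i = 0) :
    u ∈ Vk m13 m23 m33 2 ⊔ Vk m13 m23 m33 3 := by
  rw [← Finsupp.sum_single u]
  refine Submodule.sum_mem _ fun i hi => ?_
  have hbv : Finsupp.single i (u i) = u i • bv m13 m23 m33 i.1.1 i.1.2 := by
    rw [bv_of_inR i.2]; simp
  rw [hbv]
  refine Submodule.smul_mem _ _ ?_
  have hi' : ¬ (i.1.1 = 0 ∨ i.1.1 = 1) := fun hk => by simp [h i hk] at hi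
  obtain ⟨⟨k, x⟩, hx⟩ := i
  fin_cases k
  · simp at hi'
  · simp at hi'
  · exact Submodule.mem_sup_left (bv_mem_Vk _ _ _ 2 x)
  · exact Submodule.mem_sup_right (bv_mem_Vk _ _ _ 3 x)

lemma mem_of_smul_mem {m13 m23 m33 : ℤ} {U : Submodule ℂ (Wsp m13 m23 m33)} {c : ℝ}
    (hc : c ≠ 0) {w : Wsp m13 m23 m33} (h : (c : ℂ) • w ∈ U) : w ∈ U :=
  (U.smul_mem_iff (Complex.ofReal_ne_zero.2 hc)).1 h

section Module

variable {q : ℝ} {m13 m23 m33 : ℤ} {R : GZ q m13 m23 m33}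

/-- Each sector is irreducible under the raising and lowering operators `E12`, `E21`: an invariant
subspace containing one basis vector of a sector contains the whole sector. -/
lemma sector_mem (hq : 0 < q) (hq1 : q ≠ 1) {U : Submodule ℂ (Wsp m13 m23 m33)}
    (hU : Invariant q m13 m23 m33 R U) {k : Fin 4} {x : ℤ} (hx : InR m13 m23 m33 k x)
    (hxU : bv m13 m23 m33 k x ∈ U) (y : ℤ) : bv m13 m23 m33 k y ∈ U := by
  have up : ∀ y, x ≤ y → bv m13 m23 m33 k y ∈ U := by
    intro y hy
    induction y, hy using Int.leInduction with
    | base => exact hxU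
    | succ y hy ih =>
      by_cases hr : InR m13 m23 m33 k (y + 1)
      · have h1 := hx.1
        have h2 := hr.2
        have hE := hU R.E12 (by simp) _ ih
        rw [R.hE12 k y ⟨by omega, by omega⟩] at hE
        refine mem_of_smul_mem (Real.sqrt_ne_zero'.2 (mul_pos ?_ ?_)) hE <;>
          exact qn_pos hq hq1 (by omega)
      · rw [bv_of_not_inR hr]; exact U.zero_mem
  have down : ∀ y, y ≤ x → bv m13 m23 m33 k y ∈ U := by
    intro y hy
    induction y, hy using Int.leInductionDown with
    | base => exact hxU
    | pred y hy ih =>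
      by_cases hr : InR m13 m23 m33 k (y - 1)
      · have h1 := hx.2
        have h2 := hr.1
        have hE := hU R.E21 (by simp) _ ih
        rw [R.hE21 k y ⟨by omega, by omega⟩] at hE
        refine mem_of_smul_mem (Real.sqrt_ne_zero'.2 (mul_pos ?_ ?_)) hE <;>
          exact qn_pos hq hq1 (by omega)
      · rw [bv_of_not_inR hr]; exact U.zero_mem
  exact (le_total x y).elim (up y) (down y)

/-- An invariant subspace containing a vector of the sector `V₀` is everything. -/
lemma eq_top_of_bv_zero (hq : 0 < q) (hq1 : q ≠ 1) (hm : m23 ≤ m13)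
    {U : Submodule ℂ (Wsp m13 m23 m33)} (hU : Invariant q m13 m23 m33 R U) {x : ℤ}
    (hx : InR m13 m23 m33 0 x) (hxU : bv m13 m23 m33 0 x ∈ U) : U = ⊤ := by
  have h0 := sector_mem hq hq1 hU hx hxU
  have hd : 0 < qn q (m13 - m23 + 1) := qn_pos hq hq1 (by omega)
  have h1 : ∀ y, bv m13 m23 m33 1 y ∈ U := by
    have hE := hU R.E32 (by simp) _ (h0 m13)
    rw [R.hE32₀ m13 (inR_zero.2 ⟨hm, le_rfl⟩),
      bv_of_not_inR (k := 2) (x := m13) (by rw [inR_two]; omega), smul_zero, add_zero] at hE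
    exact sector_mem hq hq1 hU (inR_one.2 ⟨by omega, le_rfl⟩)
      (mem_of_smul_mem (Real.sqrt_ne_zero'.2 (div_pos hd hd)) hE)
  have h2 : ∀ y, InR m13 m23 m33 2 y → bv m13 m23 m33 2 y ∈ U := by
    intro y hy
    rw [inR_two] at hy
    have hE := hU R.E32 (by simp) _ (h0 y)
    rw [R.hE32₀ y (inR_zero.2 (by omega)),
      U.add_mem_iff_right (U.smul_mem _ (h1 y))] at hE
    refine mem_of_smul_mem (div_ne_zero (Real.sqrt_ne_zero'.2 (mul_pos ?_ ?_)) hd.ne') hE <;>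
      exact qn_pos hq hq1 (by omega)
  have h3 : ∀ y, InR m13 m23 m33 3 y → bv m13 m23 m33 3 y ∈ U := by
    intro y hy
    rw [inR_three] at hy
    have hE := hU R.E32 (by simp) _ (h1 y)
    rw [R.hE32₁ y (inR_one.2 (by omega))] at hE
    exact mem_of_smul_mem (mul_ne_zero hq.ne'
      (Real.sqrt_ne_zero'.2 (div_pos (qn_pos hq hq1 (by omega)) hd))) hE
  refine eq_top_of_bv_mem fun k y hy => ?_
  fin_cases k
  · exact h0 y
  · exact h1 y
  · exact h2 y hy
  · exact h3 y hy

/-- An invariant subspace contains the component of each of its vectors `u` at the joint eigenvalue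
of `E11` and `E33` carried by `v(k, x)`. -/
lemma weight_mem {U : Submodule ℂ (Wsp m13 m23 m33)} (hU : Invariant q m13 m23 m33 R U)
    {u : Wsp m13 m23 m33} (hu : u ∈ U) (k : Fin 4) (x : ℤ) :
    ∃ w ∈ U, ∀ i : Idx m13 m23 m33, w i =
      if i.1.2 = x ∧ M32 m13 m23 m33 i.1.1 = M32 m13 m23 m33 k then u i else 0 := by
  classical
  have h11 := filter_mem R.E11 (fun i => (i.1.2 : ℂ))
    (fun i => by simpa only [bv_of_inR i.2] using R.hE11 i.1.1 i.1.2 i.2) U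
    (hU _ (by simp)) u hu x
  have h33 := filter_mem R.E33 (fun i => ((M32 m13 m23 m33 i.1.1 : ℤ) : ℂ))
    (fun i => by simpa only [bv_of_inR i.2] using R.hE33 i.1.1 i.1.2 i.2) U
    (hU _ (by simp)) _ h11 (M32 m13 m23 m33 k : ℤ)
  refine ⟨_, h33, fun i => ?_⟩
  simp only [Finsupp.filter_apply, Int.cast_inj]
  by_cases ha : i.1.2 = x <;>
    by_cases hb : M32 m13 m23 m33 i.1.1 = M32 m13 m23 m33 k <;> simp [ha, hb]

/-- `E23` leads from a weight vector with nonzero `V₁`-part back to `V₀`: it kills `v(2, x)`, as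
`[m13 + m33 + 1] = 0`, and not `v(1, x)`, except at the bottom `x = m23 - 1` of the sector `V₁`. -/
lemma exists_bv_zero_mem (hq : 0 < q) (hq1 : q ≠ 1) (hm : m23 ≤ m13)
    (h : m13 + m33 + 1 = 0) {U : Submodule ℂ (Wsp m13 m23 m33)}
    (hU : Invariant q m13 m23 m33 R U) {x : ℤ} (hx : InR m13 m23 m33 1 x) {a b : ℂ} (ha : a ≠ 0)
    (hab : a • bv m13 m23 m33 1 x + b • bv m13 m23 m33 2 x ∈ U) :
    ∃ y, InR m13 m23 m33 0 y ∧ bv m13 m23 m33 0 y ∈ U := by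
  have hd : 0 < qn q (m13 - m23 + 1) := qn_pos hq hq1 (by omega)
  have step : ∀ y : ℤ, ∀ b : ℂ, InR m13 m23 m33 0 y →
      a • bv m13 m23 m33 1 y + b • bv m13 m23 m33 2 y ∈ U → bv m13 m23 m33 0 y ∈ U := by
    intro y b hy hyU
    rw [inR_zero] at hy
    have h2 : R.E23 (bv m13 m23 m33 2 y) = 0 := by
      by_cases hr : InR m13 m23 m33 2 y
      · rw [R.hE23₂ y hr, h, qn_zero]; simp
      · rw [bv_of_not_inR hr, map_zero]
    have hE := hU R.E23 (by simp) _ hyU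
    rw [map_add, map_smul, map_smul, h2, smul_zero, add_zero,
      R.hE23₁ y (inR_one.2 (by omega)), U.smul_mem_iff ha] at hE
    exact mem_of_smul_mem (mul_ne_zero
      (Real.sqrt_ne_zero'.2 (div_pos (qn_pos hq hq1 (by omega)) hd))
      (qn_ne_zero hq hq1 (by omega))) hE
  by_cases hxm : m23 ≤ x
  · have hx0 : InR m13 m23 m33 0 x := inR_zero.2 ⟨hxm, hx.2⟩
    exact ⟨x, hx0, step x b hx0 hab⟩
  · rw [bv_of_not_inR (k := 2) (x := x) (by rw [inR_two]; omega), smul_zero, add_zero,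
      U.smul_mem_iff ha] at hab
    have hy : InR m13 m23 m33 0 m23 := inR_zero.2 ⟨le_rfl, hm⟩
    refine ⟨m23, hy, step m23 0 hy ?_⟩
    rw [zero_smul, add_zero]
    exact U.smul_mem _ (sector_mem hq hq1 hU hx hab m23)

lemma eq_top_of_not_le (hq : 0 < q) (hq1 : q ≠ 1) (hm : m23 ≤ m13)
    (h : m13 + m33 + 1 = 0) {U : Submodule ℂ (Wsp m13 m23 m33)}
    (hU : Invariant q m13 m23 m33 R U)
    (hle : ¬ U ≤ Vk m13 m23 m33 2 ⊔ Vk m13 m23 m33 3) : U = ⊤ := by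
  classical
  obtain ⟨u, hu, hu'⟩ := SetLike.not_le_iff_exists.1 hle
  obtain ⟨⟨⟨k, x⟩, hx⟩, hk, hne⟩ :
      ∃ i : Idx m13 m23 m33, (i.1.1 = 0 ∨ i.1.1 = 1) ∧ u i ≠ 0 := by
    by_contra! hcon
    exact hu' (mem_I1 u hcon)
  obtain ⟨w, hw, hwi⟩ := weight_mem hU hu k x
  suffices ∃ y, InR m13 m23 m33 0 y ∧ bv m13 m23 m33 0 y ∈ U by
    obtain ⟨y, hy, hyU⟩ := this
    exact eq_top_of_bv_zero hq hq1 hm hU hy hyU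
  rcases hk with hk | hk <;> obtain rfl : k = _ := hk
  · have hw' : w = u ⟨(0, x), hx⟩ • bv m13 m23 m33 0 x := by
      rw [bv_of_inR hx]
      ext ⟨⟨j, y⟩, hy⟩
      rw [hwi]
      by_cases hyx : y = x
      · subst hyx
        fin_cases j <;> simp [M32, trip]
      · simp [hyx]
    rw [hw', U.smul_mem_iff hne] at hw
    exact ⟨x, hx, hw⟩
  · obtain ⟨b, hb⟩ : ∃ b : ℂ, ∀ hr : InR m13 m23 m33 2 x, u ⟨(2, x), hr⟩ = b := by
      by_cases hr : InR m13 m23 m33 2 x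
      · exact ⟨u ⟨(2, x), hr⟩, fun _ => rfl⟩
      · exact ⟨0, fun h => absurd h hr⟩
    have hw' : w = u ⟨(1, x), hx⟩ • bv m13 m23 m33 1 x + b • bv m13 m23 m33 2 x := by
      rw [bv_of_inR hx]
      ext ⟨⟨j, y⟩, hy⟩
      rw [hwi]
      by_cases hyx : y = x
      · subst hyx
        by_cases hr : InR m13 m23 m33 2 y
        · rw [bv_of_inR hr]
          fin_cases j <;> simp [M32, trip, ← hb hr]
        · rw [bv_of_not_inR hr]
          fin_cases j
          · simp [M32, trip]
          · simp [M32, trip]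
          · exact absurd hy hr
          · simp [M32, trip]
      · by_cases hr : InR m13 m23 m33 2 x
        · simp [bv_of_inR hr, hyx]
        · simp [bv_of_not_inR hr, hyx]
    rw [hw'] at hw
    exact exists_bv_zero_mem hq hq1 hm h hU hx hne hw

lemma invariant_I1 (h : m13 + m33 + 1 = 0) :
    Invariant q m13 m23 m33 R (Vk m13 m23 m33 2 ⊔ Vk m13 m23 m33 3) := by
  have h2 : ∀ (c : ℂ) x, c • bv m13 m23 m33 2 x ∈ Vk m13 m23 m33 2 ⊔ Vk m13 m23 m33 3 :=
    fun c x => Submodule.smul_mem _ _ (Submodule.mem_sup_left (bv_mem_Vk _ _ _ 2 x))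
  have h3 : ∀ (c : ℂ) x, c • bv m13 m23 m33 3 x ∈ Vk m13 m23 m33 2 ⊔ Vk m13 m23 m33 3 :=
    fun c x => Submodule.smul_mem _ _ (Submodule.mem_sup_right (bv_mem_Vk _ _ _ 3 x))
  intro E hE
  suffices Vk m13 m23 m33 2 ⊔ Vk m13 m23 m33 3 ≤
      (Vk m13 m23 m33 2 ⊔ Vk m13 m23 m33 3).comap E from this
  simp only [Set.mem_insert_iff, Set.mem_singleton_iff] at hE
  refine sup_le (Vk_le fun x hx => ?_) (Vk_le fun x hx => ?_) <;> rw [Submodule.mem_comap]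
  · rcases hE with rfl | rfl | rfl | rfl | rfl | rfl | rfl
    · rw [R.hE11 2 x hx]; exact h2 _ _
    · rw [R.hE22 2 x hx]; exact h2 _ _
    · rw [R.hE33 2 x hx]; exact h2 _ _
    · rw [R.hE12 2 x hx]; exact h2 _ _
    · rw [R.hE21 2 x hx]; exact h2 _ _
    · rw [R.hE23₂ x hx, h, qn_zero]; simp
    · rw [R.hE32₂ x hx]; exact Submodule.neg_mem _ (h3 _ _)
  · rcases hE with rfl | rfl | rfl | rfl | rfl | rfl | rfl
    · rw [R.hE11 3 x hx]; exact h3 _ _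
    · rw [R.hE22 3 x hx]; exact h3 _ _
    · rw [R.hE33 3 x hx]; exact h3 _ _
    · rw [R.hE12 3 x hx]; exact h3 _ _
    · rw [R.hE21 3 x hx]; exact h3 _ _
    · rw [R.hE23₃ x hx, h, qn_zero, mul_zero, Complex.ofReal_zero, zero_smul, zero_sub]
      exact Submodule.neg_mem _ (h2 _ _)
    · rw [R.hE32₃ x hx]; exact Submodule.zero_mem _

lemma I1_ne_top (hm : m23 ≤ m13) : Vk m13 m23 m33 2 ⊔ Vk m13 m23 m33 3 ≠ ⊤ := by
  intro htop
  have h0 : InR m13 m23 m33 0 m13 := inR_zero.2 ⟨hm, le_rfl⟩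
  have hle : Vk m13 m23 m33 2 ⊔ Vk m13 m23 m33 3 ≤
      LinearMap.ker (Finsupp.lapply (R := ℂ) (⟨(0, m13), h0⟩ : Idx m13 m23 m33)) := by
    refine sup_le (Vk_le fun x hx => ?_) (Vk_le fun x hx => ?_) <;>
      simp [bv_of_inR hx]
  have := hle (htop ▸ Submodule.mem_top : bv m13 m23 m33 0 m13 ∈ _)
  simp [bv_of_inR h0] at this

end Module

/-- Assume `m13 + m33 + 1 = 0` (class 1 nontypicality). Then
`I_1 := V_2 ⊕ V_3` is a proper invariant subspace of `W`, every proper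
invariant subspace of `W` is contained in `I_1`, and the operators induced by
`E11, E22, E33, E12, E21, E23, E32` on the quotient `W/I_1` leave no subspace
invariant except `{0}` and `W/I_1`: `W/I_1` carries the class 1 nontypical
irreducible representation of `U_q[gl(2/1)]`. -/
theorem stmt_13 (q : ℝ) (hq : 0 < q) (hq1 : q ≠ 1)
    (m13 m23 m33 : ℤ) (hm : m23 ≤ m13) (R : GZ q m13 m23 m33)
    (h1 : m13 + m33 + 1 = 0) :
    Invariant q m13 m23 m33 R (Vk m13 m23 m33 2 ⊔ Vk m13 m23 m33 3) ∧
    Vk m13 m23 m33 2 ⊔ Vk m13 m23 m33 3 ≠ ⊤ ∧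
    (∀ U : Submodule ℂ (Wsp m13 m23 m33), Invariant q m13 m23 m33 R U → U ≠ ⊤ →
      U ≤ Vk m13 m23 m33 2 ⊔ Vk m13 m23 m33 3) ∧
    (∀ Ubar : Submodule ℂ
        (Wsp m13 m23 m33 ⧸ (Vk m13 m23 m33 2 ⊔ Vk m13 m23 m33 3)),
      (∀ E ∈ ({R.E11, R.E22, R.E33, R.E12, R.E21, R.E23, R.E32} :
          Set (Wsp m13 m23 m33 →ₗ[ℂ] Wsp m13 m23 m33)),
        ∀ x : Wsp m13 m23 m33,
          (Vk m13 m23 m33 2 ⊔ Vk m13 m23 m33 3).mkQ x ∈ Ubar →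
          (Vk m13 m23 m33 2 ⊔ Vk m13 m23 m33 3).mkQ (E x) ∈ Ubar) →
      Ubar = ⊥ ∨ Ubar = ⊤) := by
  refine ⟨invariant_I1 h1, I1_ne_top hm, fun U hU hne => ?_, fun Ubar hUbar => ?_⟩
  · by_contra hle
    exact hne (eq_top_of_not_le hq hq1 hm h1 hU hle)
  · have hinv : Invariant q m13 m23 m33 R
        (Ubar.comap (Vk m13 m23 m33 2 ⊔ Vk m13 m23 m33 3).mkQ) := hUbar
    have hmap := Submodule.map_comap_eq_of_surjective
      (Submodule.mkQ_surjective (Vk m13 m23 m33 2 ⊔ Vk m13 m23 m33 3)) Ubar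
    by_cases hle : Ubar.comap (Vk m13 m23 m33 2 ⊔ Vk m13 m23 m33 3).mkQ ≤
        Vk m13 m23 m33 2 ⊔ Vk m13 m23 m33 3
    · left
      rw [← hmap, eq_bot_iff, Submodule.map_le_iff_le_comap, Submodule.comap_bot,
        Submodule.ker_mkQ]
      exact hle
    · right
      rw [← hmap, eq_top_of_not_le hq hq1 hm h1 hinv hle, Submodule.map_top,
        Submodule.range_mkQ]
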